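/- Let 𝕄 = ⟨M, 𝒞⟩ be a countable transitive model of GB⁻. If ℙ ∈ M is a notion of set forcing (i.e. its domain and ordering are elements of M), then ℙ has bounded names. -/

import Mathlib

noncomputable section

namespace CF

open scoped ZFSet

attribute [local instance] Classical.propDecidable

/-! ### First-order formulas of the language of set theory -/

/-- First-order `∈`-formulas with variables indexed by `ℕ`. -/
inductive EFormula : Type
  | mem : ℕ → ℕ → EFormula
  | eq : ℕ → ℕ → EFormula
  | not : EFormula → EFormula
  | or : EFormula → EFormula → EFormula
  | ex : ℕ → EFormula → EFormula

/-- Satisfaction of an `∈`-formula in the structure `⟨D, ∈⟩` under assignment `v`. -/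
def EFormula.Sat (D : Set ZFSet) (v : ℕ → ZFSet) : EFormula → Prop
  | .mem i j => v i ∈ v j
  | .eq i j => v i = v j
  | .not φ => ¬ EFormula.Sat D v φ
  | .or φ ψ => EFormula.Sat D v φ ∨ EFormula.Sat D v ψ
  | .ex i φ => ∃ x ∈ D, EFormula.Sat D (Function.update v i x) φ

/-- All variables occurring in the formula are `< m`. -/
def EFormula.VarsLt (m : ℕ) : EFormula → Prop
  | .mem i j => i < m ∧ j < m
  | .eq i j => i < m ∧ j < m
  | .not φ => EFormula.VarsLt m φ
  | .or φ ψ => EFormula.VarsLt m φ ∧ EFormula.VarsLt m ψ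
  | .ex i φ => i < m ∧ EFormula.VarsLt m φ

/-- First-order formulas of the two-sorted language of `GB⁻`: set variables indexed by `ℕ`,
class parameters indexed by `ℕ`, and only set quantifiers. -/
inductive GBFormula : Type
  | mem : ℕ → ℕ → GBFormula
  | eq : ℕ → ℕ → GBFormula
  | cls : ℕ → ℕ → GBFormula    -- `vᵢ ∈ C_j`
  | not : GBFormula → GBFormula
  | or : GBFormula → GBFormula → GBFormula
  | ex : ℕ → GBFormula → GBFormula

/-- Satisfaction of a `GBFormula` with set quantifiers ranging over `Mset`,
class parameters `Cs` and set assignment `v`. -/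
def GBFormula.Sat (Mset : Set ZFSet) (Cs : ℕ → Set ZFSet) (v : ℕ → ZFSet) : GBFormula → Prop
  | .mem i j => v i ∈ v j
  | .eq i j => v i = v j
  | .cls i j => v i ∈ Cs j
  | .not φ => ¬ GBFormula.Sat Mset Cs v φ
  | .or φ ψ => GBFormula.Sat Mset Cs v φ ∨ GBFormula.Sat Mset Cs v ψ
  | .ex i φ => ∃ x ∈ Mset, GBFormula.Sat Mset Cs (Function.update v i x) φ

/-! ### Countable transitive models of GB⁻ -/

/-- A countable transitive second-order model `𝕄 = ⟨M, 𝒞⟩` of `GB⁻`: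
`M` is transitive and countable, classes are subsets of `M`, sets are classes, and the axioms
of `GB⁻` hold (extensionality and foundation are automatic for `ZFSet`; the set axioms of `ZF⁻`
with separation and collection allowing class parameters, together with first-order class
comprehension, are listed). -/
structure GBModel.{u} where
  M : Set ZFSet.{u}
  Cls : Set (Set ZFSet)
  countable_M : M.Countable
  countable_Cls : Cls.Countable
  transitive : ∀ x ∈ M, ∀ y : ZFSet, y ∈ x → y ∈ M
  sets_are_classes : ∀ x ∈ M, x.toSet ∈ Cls
  classes_sub : ∀ C ∈ Cls, C ⊆ M
  empty_mem : (∅ : ZFSet) ∈ M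
  pair_mem : ∀ x ∈ M, ∀ y ∈ M, ({x, y} : ZFSet) ∈ M
  sUnion_mem : ∀ x ∈ M, (⋃₀ x : ZFSet) ∈ M
  omega_mem : ZFSet.omega ∈ M
  comprehension : ∀ (φ : GBFormula) (v : ℕ → ZFSet) (Cs : ℕ → Set ZFSet),
    (∀ n, v n ∈ M) → (∀ n, Cs n ∈ Cls) →
    {x : ZFSet | x ∈ M ∧ GBFormula.Sat M Cs (Function.update v 0 x) φ} ∈ Cls
  separation : ∀ C ∈ Cls, ∀ a ∈ M, ∃ b ∈ M, ∀ x : ZFSet, x ∈ b ↔ x ∈ a ∧ x ∈ C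
  collection : ∀ C ∈ Cls, ∀ a ∈ M,
    (∀ x : ZFSet, x ∈ a → ∃ y ∈ M, x.pair y ∈ C) →
    ∃ b ∈ M, ∀ x : ZFSet, x ∈ a → ∃ y : ZFSet, y ∈ b ∧ x.pair y ∈ C

/-- A notion of class forcing `ℙ = ⟨P, ≤_ℙ⟩` for `𝕄`: a partial order (with maximal element
`𝟙_ℙ`) whose domain and order relation are classes of `𝕄`. -/
structure ClassForcing (𝕄 : GBModel) where
  P : Set ZFSet
  le : ZFSet → ZFSet → Prop
  one : ZFSet
  one_mem : one ∈ P
  le_one : ∀ p ∈ P, le p one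
  le_refl : ∀ p ∈ P, le p p
  le_trans : ∀ p q r : ZFSet, le p q → le q r → le p r
  P_cls : P ∈ 𝕄.Cls
  le_cls : {x : ZFSet | ∃ p ∈ P, ∃ q ∈ P, le p q ∧ x = p.pair q} ∈ 𝕄.Cls

/-! ### Names and their evaluation -/

/-- Auxiliary rank-bounded version of `IsName`. -/
def IsNameAux (S : Set ZFSet) (o : Ordinal) (σ : ZFSet) : Prop :=
  ∀ x ∈ σ.toSet, ∃ τ p : ZFSet, x = τ.pair p ∧ p ∈ S ∧
    ∃ _h : τ.rank < o, IsNameAux S τ.rank τ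
termination_by o

/-- `σ` is a `ℙ`-name (for the forcing with conditions `S`): every element of `σ` is a pair
`⟨τ, p⟩` with `τ` a `ℙ`-name and `p ∈ S`. -/
def IsName (S : Set ZFSet) (σ : ZFSet) : Prop := IsNameAux S σ.rank σ

/-- Image of a ZFSet under an arbitrary function (using choice for definability). -/
def zimage (f : ZFSet → ZFSet) (x : ZFSet) : ZFSet :=
  @ZFSet.image f (Classical.allZFSetDefinable _) x

/-- Auxiliary rank-bounded version of the evaluation `σ^G` of a name by a filter. -/
def nameEvalAux (G : Set ZFSet) (o : Ordinal) (σ : ZFSet) : ZFSet :=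
  zimage (fun τ => if h : τ.rank < o then nameEvalAux G τ.rank τ else ∅)
    (ZFSet.sep (fun τ => ∃ p, p ∈ G ∧ τ.pair p ∈ σ) (⋃₀ ⋃₀ σ))
termination_by o
decreasing_by exact h

/-- The evaluation `σ^G = {τ^G | ∃ p ∈ G, ⟨τ, p⟩ ∈ σ}` of a name `σ` by a filter `G`. -/
def nameEval (G : Set ZFSet) (σ : ZFSet) : ZFSet := nameEvalAux G σ.rank σ

/-- Auxiliary rank-bounded version of `nameTC`. -/
def nameTCAux (o : Ordinal) (σ : ZFSet) : Set ZFSet :=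
  {x | ∃ τ p : ZFSet, τ.pair p ∈ σ ∧ (x = p ∨ ∃ _h : τ.rank < o, x ∈ nameTCAux τ.rank τ)}
termination_by o

/-- The set `tc(σ) = ⋃ {{p} ∪ tc(τ) | ⟨τ,p⟩ ∈ σ}` of conditions appearing in the transitive
closure of the name `σ`. -/
def nameTC (σ : ZFSet) : Set ZFSet := nameTCAux σ.rank σ

/-! ### Filters, genericity, generic extensions -/

/-- `G` is a filter on the partial order with domain `S` and ordering `le`. -/
def IsFilterOn (S : Set ZFSet) (le : ZFSet → ZFSet → Prop) (G : Set ZFSet) : Prop :=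
  G ⊆ S ∧ G.Nonempty ∧ (∀ p ∈ G, ∀ q ∈ S, le p q → q ∈ G) ∧
    ∀ p ∈ G, ∀ q ∈ G, ∃ r ∈ G, le r p ∧ le r q

/-- `D` is a dense subclass of the partial order `⟨S, le⟩`. -/
def DenseIn (S : Set ZFSet) (le : ZFSet → ZFSet → Prop) (D : Set ZFSet) : Prop :=
  D ⊆ S ∧ ∀ p ∈ S, ∃ q ∈ D, le q p

/-- `G` is a generic filter on `⟨S, le⟩` over `𝕄`: a filter meeting every dense subclass
of `⟨S, le⟩` lying in `𝒞`. -/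
def IsGeneric (𝕄 : GBModel) (S : Set ZFSet) (le : ZFSet → ZFSet → Prop) (G : Set ZFSet) : Prop :=
  IsFilterOn S le G ∧ ∀ D ∈ 𝕄.Cls, DenseIn S le D → (G ∩ D).Nonempty

/-- The generic extension `M[G] = {σ^G | σ ∈ M a name for the forcing with domain S}`. -/
def MGen (𝕄 : GBModel) (S : Set ZFSet) (G : Set ZFSet) : Set ZFSet :=
  {x | ∃ σ : ZFSet, σ ∈ 𝕄.M ∧ IsName S σ ∧ nameEval G σ = x}

/-! ### Compatibility, the set decision property -/

/-- `p` and `q` are compatible in `⟨S, le⟩`. -/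
def Compat (S : Set ZFSet) (le : ZFSet → ZFSet → Prop) (p q : ZFSet) : Prop :=
  ∃ r ∈ S, le r p ∧ le r q

/-- `p ≤* q` : every extension of `p` is compatible with `q`. -/
def leStar (S : Set ZFSet) (le : ZFSet → ZFSet → Prop) (p q : ZFSet) : Prop :=
  ∀ r ∈ S, le r p → Compat S le r q

/-- `p` decides the set of conditions `A`: for every `a ∈ A`, either `p ≤* a` or `p ⊥ a`. -/
def Decides (S : Set ZFSet) (le : ZFSet → ZFSet → Prop) (p A : ZFSet) : Prop :=
  ∀ a : ZFSet, a ∈ A → leStar S le p a ∨ ¬ Compat S le p a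

/-- The set decision property: every set of conditions in `M` is decided densely. -/
def SetDecisionProperty (𝕄 : GBModel) (F : ClassForcing 𝕄) : Prop :=
  ∀ p ∈ F.P, ∀ A : ZFSet, A ∈ 𝕄.M → (∀ a : ZFSet, a ∈ A → a ∈ F.P) →
    ∃ q ∈ F.P, F.le q p ∧ Decides F.P F.le q A

/-! ### The forcing theorem -/

/-- Encode a finite list of sets as a single set by iterated Kuratowski pairing. -/
def listEncode : List ZFSet → ZFSet
  | [] => ∅
  | a :: l => a.pair (listEncode l)

/-- The assignment sending variable `n < m` to `σₙ^G` (and `∅` beyond `m`). -/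
def namesAssign (G : Set ZFSet) (m : ℕ) (σs : Fin m → ZFSet) : ℕ → ZFSet :=
  fun n => if h : n < m then nameEval G (σs ⟨n, h⟩) else ∅

/-- `p ⊩_ℙ φ(σ₀, …, σ_{m-1})` : for every generic `G ∋ p`, `M[G] ⊨ φ(σ₀^G, …, σ_{m-1}^G)`. -/
def Forces (𝕄 : GBModel) (F : ClassForcing 𝕄) (φ : EFormula) (m : ℕ) (p : ZFSet)
    (σs : Fin m → ZFSet) : Prop :=
  ∀ G : Set ZFSet, IsGeneric 𝕄 F.P F.le G → p ∈ G →
    EFormula.Sat (MGen 𝕄 F.P G) (namesAssign G m σs) φ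

/-- `ℙ` satisfies the forcing theorem over `𝕄`: for every `∈`-formula `φ(v₀,…,v_{m-1})`,
the forcing relation is a class of `𝕄` (definability lemma) and everything true in a generic
extension is forced by a condition in the generic filter (truth lemma). -/
def SatisfiesForcingTheorem (𝕄 : GBModel) (F : ClassForcing 𝕄) : Prop :=
  ∀ (φ : EFormula) (m : ℕ), EFormula.VarsLt m φ →
    ({x : ZFSet | ∃ p ∈ F.P, ∃ σs : Fin m → ZFSet,
        (∀ i, σs i ∈ 𝕄.M ∧ IsName F.P (σs i)) ∧
        Forces 𝕄 F φ m p σs ∧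
        x = p.pair (listEncode (List.ofFn σs))} ∈ 𝕄.Cls) ∧
    ∀ σs : Fin m → ZFSet, (∀ i, σs i ∈ 𝕄.M ∧ IsName F.P (σs i)) →
      ∀ G : Set ZFSet, IsGeneric 𝕄 F.P F.le G →
        EFormula.Sat (MGen 𝕄 F.P G) (namesAssign G m σs) φ →
        ∃ p ∈ G, Forces 𝕄 F φ m p σs

/-! ### Complete subforcings, the set reduction property -/

/-- `A` is an antichain of the partial order `⟨S, le⟩`. -/
def IsAntichainIn (S : Set ZFSet) (le : ZFSet → ZFSet → Prop) (A : Set ZFSet) : Prop :=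
  A ⊆ S ∧ ∀ p ∈ A, ∀ q ∈ A, p ≠ q → ¬ Compat S le p q

/-- `A` is a maximal antichain of the partial order `⟨S, le⟩`. -/
def IsMaxAntichainIn (S : Set ZFSet) (le : ZFSet → ZFSet → Prop) (A : Set ZFSet) : Prop :=
  IsAntichainIn S le A ∧ ∀ p ∈ S, ∃ a ∈ A, Compat S le p a

/-- `ℚ ⊲∘ ℙ` : `Q` is a set-sized complete subforcing of `ℙ` (with the induced ordering):
`Q ∈ M`, `Q ⊆ P`, `𝟙 ∈ Q`, and every maximal antichain of `ℚ` in `M` is predense in `ℙ`. -/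
def IsCompleteSub (𝕄 : GBModel) (F : ClassForcing 𝕄) (Q : ZFSet) : Prop :=
  Q ∈ 𝕄.M ∧ Q.toSet ⊆ F.P ∧ F.one ∈ Q ∧
    ∀ A : ZFSet, A ∈ 𝕄.M → A.toSet ⊆ Q.toSet → IsMaxAntichainIn Q.toSet F.le A.toSet →
      ∀ p ∈ F.P, ∃ a : ZFSet, a ∈ A ∧ Compat F.P F.le p a

/-- `ℚ^{∥q}` : the conditions of `Q` compatible with `q` in `ℙ`. -/
def QPar (𝕄 : GBModel) (F : ClassForcing 𝕄) (Q : ZFSet) (q : ZFSet) : Set ZFSet :=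
  {r | r ∈ Q ∧ Compat F.P F.le r q}

/-- The property `(*)(A, q, ℚ)`: for every `a ∈ A`, the set of `r ∈ ℚ^{∥q}` such that either
all `s ≤ q, r` satisfy `s ≤* a`, or all `s ≤ q, r` satisfy `s ⊥ a`, is dense in `ℚ^{∥q}`. -/
def StarProp (𝕄 : GBModel) (F : ClassForcing 𝕄) (A q Q : ZFSet) : Prop :=
  ∀ a : ZFSet, a ∈ A → ∀ r₀ ∈ QPar 𝕄 F Q q, ∃ r₁ ∈ QPar 𝕄 F Q q, F.le r₁ r₀ ∧
    ((∀ s ∈ F.P, F.le s q → F.le s r₁ → leStar F.P F.le s a) ∨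
      (∀ s ∈ F.P, F.le s q → F.le s r₁ → ¬ Compat F.P F.le s a))

/-- The set reduction property. -/
def SetReductionProperty (𝕄 : GBModel) (F : ClassForcing 𝕄) : Prop :=
  ∀ A : ZFSet, A ∈ 𝕄.M → (∀ a : ZFSet, a ∈ A → a ∈ F.P) →
    ∀ p ∈ F.P, ∃ q ∈ F.P, F.le q p ∧ ∃ Q : ZFSet, IsCompleteSub 𝕄 F Q ∧ StarProp 𝕄 F A q Q

/-- Every new set added by `ℙ` is added by a set-sized complete subforcing of `ℙ`. -/
def EveryNewSetBySub (𝕄 : GBModel) (F : ClassForcing 𝕄) : Prop :=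
  ∀ G : Set ZFSet, IsGeneric 𝕄 F.P F.le G →
    ∀ x : ZFSet, x ∈ MGen 𝕄 F.P G → x ∉ 𝕄.M →
      ∃ Q : ZFSet, IsCompleteSub 𝕄 F Q ∧ x ∈ MGen 𝕄 Q.toSet (G ∩ Q.toSet)

/-! ### The q-reduction of a name -/

/-- First component of a Kuratowski pair (junk value `∅` otherwise). -/
def fstZ (x : ZFSet) : ZFSet :=
  if h : ∃ a b : ZFSet, x = a.pair b then h.choose else ∅

/-- Second component of a Kuratowski pair (junk value `∅` otherwise). -/
def sndZ (x : ZFSet) : ZFSet :=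
  if h : ∃ a b : ZFSet, x = a.pair b then h.choose_spec.choose else ∅

/-- Cartesian product of two `ZFSet`s. -/
def zprod (a b : ZFSet) : ZFSet :=
  ZFSet.sep (fun x => ∃ u v : ZFSet, u ∈ a ∧ v ∈ b ∧ x = u.pair v)
    (ZFSet.powerset (ZFSet.powerset (a ∪ b)))

/-- Auxiliary rank-bounded version of the `q`-reduction of a name to `Q`. -/
def reduceAux (S : Set ZFSet) (le : ZFSet → ZFSet → Prop) (Q q : ZFSet) (o : Ordinal)
    (σ : ZFSet) : ZFSet :=
  zimage
    (fun x =>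
      (if h : (fstZ x).rank < o then reduceAux S le Q q (fstZ x).rank (fstZ x) else ∅).pair
        (sndZ x))
    (ZFSet.sep
      (fun x => ∃ τ r : ZFSet, x = τ.pair r ∧ r ∈ Q ∧
        ∃ a : ZFSet, τ.pair a ∈ σ ∧ ∀ s ∈ S, le s q → le s r → leStar S le s a)
      (zprod (⋃₀ ⋃₀ σ) Q))
termination_by o
decreasing_by exact h

/-- The `q`-reduction `σ_q^ℚ = {⟨τ_q^ℚ, r⟩ | r ∈ ℚ ∧ ∃a (⟨τ,a⟩ ∈ σ ∧ ∀ s ≤ q,r (s ≤* a))}`. -/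
def reduceName (S : Set ZFSet) (le : ZFSet → ZFSet → Prop) (Q q σ : ZFSet) : ZFSet :=
  reduceAux S le Q q σ.rank σ

/-! ### Projections -/

/-- `f` is a projection from `⟨S, le⟩` (with maximum `one`) onto the subforcing with domain
`Qs`, respecting `X`. -/
def IsProjectionResp (S : Set ZFSet) (le : ZFSet → ZFSet → Prop) (one : ZFSet)
    (Qs X : Set ZFSet) (f : ZFSet → ZFSet) : Prop :=
  (∀ p ∈ S, f p ∈ Qs) ∧
  f one = one ∧
  (∀ p ∈ S, ∀ q ∈ S, le p q → le (f p) (f q)) ∧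
  (∀ p ∈ S, ∀ q ∈ Qs, le q (f p) → ∃ r ∈ S, le r p ∧ le (f r) q) ∧
  (∀ p ∈ X, ∀ q ∈ S, le (f q) p → le q p) ∧
  (∀ p ∈ X, f p = p)

/-- `ℙ` is approachable by projections: there is a class `Π ∈ 𝒞` whose sections `π_{X,y}`
are such that for every set `X ⊆ ℙ` there are a set `y` and a set-sized subforcing `ℚ ⊇ X ∪ {𝟙}`
of `ℙ` with `π_{X,y} : ℙ → ℚ` a projection respecting `X`. -/
def ApproachableByProjections (𝕄 : GBModel) (F : ClassForcing 𝕄) : Prop :=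
  ∃ Pi ∈ 𝕄.Cls, ∀ X : ZFSet, X ∈ 𝕄.M → (∀ x : ZFSet, x ∈ X → x ∈ F.P) →
    ∃ y ∈ 𝕄.M, ∃ Q : ZFSet, Q ∈ 𝕄.M ∧ Q.toSet ⊆ F.P ∧ (∀ x : ZFSet, x ∈ X → x ∈ Q) ∧
      F.one ∈ Q ∧ ∃ f : ZFSet → ZFSet,
        (∀ u ∈ F.P, ∀ v : ZFSet, (f u = v ↔ X.pair (y.pair (u.pair v)) ∈ Pi)) ∧
        IsProjectionResp F.P F.le F.one Q.toSet X.toSet f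

/-- `p ⊩ σ ⊆ τ` for the forcing with domain `S` and ordering `le`. -/
def ForcesSubset (𝕄 : GBModel) (S : Set ZFSet) (le : ZFSet → ZFSet → Prop)
    (p σ τ : ZFSet) : Prop :=
  ∀ G : Set ZFSet, IsGeneric 𝕄 S le G → p ∈ G → nameEval G σ ⊆ nameEval G τ

/-! ### Bounded names, turning proper classes into sets -/

/-- The possible values of the name `σ` in generic extensions. -/
def PossibleValues (𝕄 : GBModel) (S : Set ZFSet) (le : ZFSet → ZFSet → Prop)
    (σ : ZFSet) : Set ZFSet :=
  {x | ∃ G : Set ZFSet, IsGeneric 𝕄 S le G ∧ nameEval G σ = x}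

/-- The name `σ` is bounded: some `A ∈ M` covers all its possible values lying in `M`. -/
def IsBoundedName (𝕄 : GBModel) (F : ClassForcing 𝕄) (σ : ZFSet) : Prop :=
  ∃ A ∈ 𝕄.M, PossibleValues 𝕄 F.P F.le σ ∩ 𝕄.M ⊆ A.toSet

/-- `ℙ` has bounded names: every `ℙ`-name in `M` is bounded. -/
def HasBoundedNames (𝕄 : GBModel) (F : ClassForcing 𝕄) : Prop :=
  ∀ σ : ZFSet, σ ∈ 𝕄.M → IsName F.P σ → IsBoundedName 𝕄 F σ

/-- `X` is a proper class of `𝕄`: a class of `𝕄` that is not (the extension of) a set of `𝕄`. -/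
def IsProperClass (𝕄 : GBModel) (X : Set ZFSet) : Prop :=
  X ∈ 𝕄.Cls ∧ ¬ ∃ x ∈ 𝕄.M, x.toSet = X

/-- The proper class `X` of `𝕄` is turned into a set by forcing with `ℙ`: some `ℙ`-name in `M`
evaluates to `X` under some generic filter. -/
def TurnsIntoSet (𝕄 : GBModel) (F : ClassForcing 𝕄) (X : Set ZFSet) : Prop :=
  ∃ σ : ZFSet, σ ∈ 𝕄.M ∧ IsName F.P σ ∧
    ∃ G : Set ZFSet, IsGeneric 𝕄 F.P F.le G ∧ (nameEval G σ).toSet = X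

/-! ### Functions and partial functions as sets, collapse forcings -/

/-- `p` is a partial function from (a subset of) `γ` into the class `Y`. -/
def IsPFunOn (p γ : ZFSet) (Y : Set ZFSet) : Prop :=
  (∀ x : ZFSet, x ∈ p → ∃ a b : ZFSet, x = a.pair b ∧ a ∈ γ ∧ b ∈ Y) ∧
  ∀ a b b' : ZFSet, a.pair b ∈ p → a.pair b' ∈ p → b = b'

/-- The domain of a set of pairs. -/
def pdom (p : ZFSet) : Set ZFSet := {a | ∃ b : ZFSet, a.pair b ∈ p}

/-- `f` is (the graph of) an injective function from `X` into `Y`. -/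
def ZInjFun (f : ZFSet) (X Y : Set ZFSet) : Prop :=
  (∀ x : ZFSet, x ∈ f → ∃ a b : ZFSet, x = a.pair b ∧ a ∈ X ∧ b ∈ Y) ∧
  (∀ a b b' : ZFSet, a.pair b ∈ f → a.pair b' ∈ f → b = b') ∧
  (∀ a ∈ X, ∃ b : ZFSet, a.pair b ∈ f) ∧
  (∀ a a' b : ZFSet, a.pair b ∈ f → a'.pair b ∈ f → a = a')

/-- `D` has size less than the cardinality of `γ` in the sense of `M`:
no function of `M` injects `γ` into `D`. -/
def SmallerThan (𝕄 : GBModel) (γ : ZFSet) (D : Set ZFSet) : Prop :=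
  ¬ ∃ f ∈ 𝕄.M, ZInjFun f γ.toSet D

/-- Conditions of `Col(γ, Y)^M`: partial functions of `M` from `γ` to `Y` whose domain has
size less than the cardinality of `γ` in `M`. -/
def ColCond (𝕄 : GBModel) (γ : ZFSet) (Y : Set ZFSet) (p : ZFSet) : Prop :=
  p ∈ 𝕄.M ∧ IsPFunOn p γ Y ∧ SmallerThan 𝕄 γ (pdom p)

/-- Conditions of `Col₋*(γ, Y)^M`: those conditions of `Col(γ, Y)^M` whose domain is
an ordinal. -/
def ColStarCond (𝕄 : GBModel) (γ : ZFSet) (Y : Set ZFSet) (p : ZFSet) : Prop :=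
  ColCond 𝕄 γ Y p ∧ ∃ β : ZFSet, β.IsOrdinal ∧ pdom p = β.toSet

/-- `f` is (the graph of) a function with domain `I`. -/
def ZFuncOn (f I : ZFSet) : Prop :=
  (∀ x : ZFSet, x ∈ f → ∃ a b : ZFSet, x = a.pair b ∧ a ∈ I) ∧
  (∀ a b b' : ZFSet, a.pair b ∈ f → a.pair b' ∈ f → b = b') ∧
  (∀ a : ZFSet, a ∈ I → ∃ b : ZFSet, a.pair b ∈ f)

/-- Application of a set-function to an argument (junk value `∅` if undefined). -/
def zapp (f i : ZFSet) : ZFSet :=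
  if h : ∃ b : ZFSet, i.pair b ∈ f then h.choose else ∅

/-! ### Pretameness -/

/-- `ℙ` is pretame for `𝕄`: for every `p ∈ ℙ`, `I ∈ M` and every `𝒞`-coded sequence
`⟨D_i | i ∈ I⟩` (coded as the class of pairs `⟨i, x⟩` with `x ∈ D_i`) of dense subclasses
of `ℙ`, there are `q ≤ p` and `⟨d_i | i ∈ I⟩ ∈ M` with `d_i ⊆ D_i` predense below `q`. -/
def Pretame (𝕄 : GBModel) (F : ClassForcing 𝕄) : Prop :=
  ∀ p ∈ F.P, ∀ I : ZFSet, I ∈ 𝕄.M → ∀ D ∈ 𝕄.Cls,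
    (∀ i : ZFSet, i ∈ I →
      (∀ x : ZFSet, i.pair x ∈ D → x ∈ F.P) ∧ ∀ r ∈ F.P, ∃ s : ZFSet, i.pair s ∈ D ∧ F.le s r) →
    ∃ q ∈ F.P, F.le q p ∧ ∃ d ∈ 𝕄.M, ZFuncOn d I ∧
      ∀ i : ZFSet, i ∈ I → (∀ x : ZFSet, x ∈ zapp d i → i.pair x ∈ D) ∧
        ∀ r ∈ F.P, F.le r q → ∃ a : ZFSet, a ∈ zapp d i ∧ Compat F.P F.le r a

/-! ### The specific forcings of Sections 6 and 7 -/

/-- Conditions of Definition 6.8: (not necessarily finite) partial functions from `ω` to `2`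
lying in `M`. -/
def PCond (𝕄 : GBModel) (p : ZFSet) : Prop :=
  p ∈ 𝕄.M ∧ IsPFunOn p ZFSet.omega {x : ZFSet | x = ∅ ∨ x = ({∅} : ZFSet)}

/-- Conditions of the finite support product `ℚ` of `ω` many copies of `ℙ`:
finite sequences `⟨p₀, …, p_k⟩` of `ℙ`-conditions. -/
def QCond (𝕄 : GBModel) (s : ZFSet) : Prop :=
  s ∈ 𝕄.M ∧ ∃ n : ZFSet, n ∈ ZFSet.omega ∧ ZFuncOn s n ∧
    ∀ i : ZFSet, i ∈ n → PCond 𝕄 (zapp s i)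

/-- The coordinatewise ordering on `ℚ`. -/
def QLe (s' s : ZFSet) : Prop :=
  pdom s ⊆ pdom s' ∧ ∀ i ∈ pdom s, zapp s i ⊆ zapp s' i

/-- The power class `𝒫(ω)^M`. -/
def PowOmega (𝕄 : GBModel) : Set ZFSet :=
  {x : ZFSet | x ∈ 𝕄.M ∧ x ⊆ ZFSet.omega}

/-- `X ⊆ M` is definable over `⟨M, ∈⟩` (from set parameters). -/
def DefinableOver (Mset : Set ZFSet) (X : Set ZFSet) : Prop :=
  ∃ (φ : EFormula) (v : ℕ → ZFSet), (∀ n, v n ∈ Mset) ∧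
    X = {x : ZFSet | x ∈ Mset ∧ EFormula.Sat Mset (Function.update v 0 x) φ}

/-- Every set of `M` is countable in `M`: it injects into `ω` by a function of `M`. -/
def AllSetsCountable (𝕄 : GBModel) : Prop :=
  ∀ x ∈ 𝕄.M, ∃ f ∈ 𝕄.M, ZInjFun f x.toSet ZFSet.omega.toSet

/-!
Let `P ∈ M` be the set of conditions. If `p ⊩ τ = y̌` and `p ∈ G`, then `τ^G = y`, so each condition
decides at most one value in `M` for a given name; and if `τ^G = y ∈ M`, then some `p ∈ G` forces
this. Collection over `P`, applied to the relation `p ⊩ σ = y̌`, therefore yields a set of `M`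
containing every possible value of `σ` in `M`.

For collection the relation `p ⊩ τ = y̌` must be a class of `𝕄`. It satisfies a recursion on `τ`,
and is here taken to be the union of all sets of `M` that are closed under unravelling this
recursion. As `P` is a set, every instance of the recursion takes place inside some set of `M`, so
this union satisfies the recursion in both directions.
-/

section

open Function

universe u

/-! ### Definability over a model -/

/-- Renames the class parameters of a formula. -/
def GBFormula.renameClasses (κ : ℕ → ℕ) : GBFormula → GBFormula
  | .mem i j => .mem i j
  | .eq i j => .eq i j
  | .cls i j => .cls i (κ j)
  | .not φ => .not (φ.renameClasses κ)
  | .or φ ψ => .or (φ.renameClasses κ) (ψ.renameClasses κ)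
  | .ex i φ => .ex i (φ.renameClasses κ)

theorem GBFormula.sat_renameClasses (S : Set ZFSet) (Cs : ℕ → Set ZFSet) (κ : ℕ → ℕ)
    (φ : GBFormula) (v : ℕ → ZFSet) : (φ.renameClasses κ).Sat S Cs v ↔ φ.Sat S (Cs ∘ κ) v := by
  induction φ generalizing v with
  | mem | eq | cls => rfl
  | not φ ih => simp only [renameClasses, Sat, ih]
  | or φ ψ ihφ ihψ => simp only [renameClasses, Sat, ihφ, ihψ]
  | ex i φ ih => simp only [renameClasses, Sat, ih]

variable {𝕄 : GBModel.{u}}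

namespace GBModel

instance : Membership 𝕄.M 𝕄.M := ⟨fun y x => x.1 ∈ y.1⟩

theorem mem_iff {x y : 𝕄.M} : x ∈ y ↔ x.1 ∈ y.1 := Iff.rfl

theorem ext_iff {x y : 𝕄.M} : x = y ↔ ∀ z : 𝕄.M, z ∈ x ↔ z ∈ y :=
  ⟨by rintro rfl _; rfl, fun h => Subtype.ext <| ZFSet.ext fun z =>
    ⟨fun hz => (h ⟨z, 𝕄.transitive _ x.2 _ hz⟩).1 hz,
      fun hz => (h ⟨z, 𝕄.transitive _ y.2 _ hz⟩).2 hz⟩⟩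

/-- The unordered pair, as an operation on the sets of the model. -/
def upair (x y : 𝕄.M) : 𝕄.M := ⟨{x.1, y.1}, 𝕄.pair_mem _ x.2 _ y.2⟩

theorem mem_upair {x y z : 𝕄.M} : z ∈ upair x y ↔ z = x ∨ z = y := by
  simp only [mem_iff, upair, ZFSet.mem_pair, Subtype.ext_iff]

/-- The Kuratowski pair, as an operation on the sets of the model. -/
def opair (x y : 𝕄.M) : 𝕄.M := upair (upair x x) (upair x y)

theorem coe_opair (x y : 𝕄.M) : (opair x y : ZFSet) = x.1.pair y.1 := by
  simp only [opair, upair, ZFSet.pair, ZFSet.pair_eq_singleton]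

theorem opair_inj {x y x' y' : 𝕄.M} : opair x y = opair x' y' ↔ x = x' ∧ y = y' := by
  simp only [Subtype.ext_iff, coe_opair, ZFSet.pair_inj]

end GBModel

open GBModel

/-- A property of assignments `ℕ → 𝕄.M` that is the satisfaction relation of some formula with
class parameters from `𝕄`. -/
def Expressible (Φ : (ℕ → 𝕄.M) → Prop) : Prop :=
  ∃ (φ : GBFormula) (Cs : ℕ → Set ZFSet), (∀ k, Cs k ∈ 𝕄.Cls) ∧
    ∀ v, φ.Sat 𝕄.M Cs (Subtype.val ∘ v) ↔ Φ v

namespace Expressible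

variable {Φ Ψ : (ℕ → 𝕄.M) → Prop}

theorem var_eq (i j : ℕ) : Expressible fun v : ℕ → 𝕄.M => v i = v j :=
  ⟨.eq i j, fun _ => (∅ : ZFSet).toSet, fun _ => 𝕄.sets_are_classes _ 𝕄.empty_mem,
    fun _ => Subtype.ext_iff.symm⟩

theorem var_mem (i j : ℕ) : Expressible fun v : ℕ → 𝕄.M => v i ∈ v j :=
  ⟨.mem i j, fun _ => (∅ : ZFSet).toSet, fun _ => 𝕄.sets_are_classes _ 𝕄.empty_mem,
    fun _ => Iff.rfl⟩

theorem var_mem_class {C : Set ZFSet} (hC : C ∈ 𝕄.Cls) (i : ℕ) :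
    Expressible fun v : ℕ → 𝕄.M => (v i : ZFSet) ∈ C :=
  ⟨.cls i 0, fun _ => C, fun _ => hC, fun _ => Iff.rfl⟩

theorem not (hΦ : Expressible Φ) : Expressible fun v => ¬Φ v := by
  obtain ⟨φ, Cs, hCs, hφ⟩ := hΦ
  exact ⟨.not φ, Cs, hCs, fun v => not_congr (hφ v)⟩

theorem or (hΦ : Expressible Φ) (hΨ : Expressible Ψ) : Expressible fun v => Φ v ∨ Ψ v := by
  obtain ⟨φ, Cs, hCs, hφ⟩ := hΦ
  obtain ⟨ψ, Ds, hDs, hψ⟩ := hΨ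
  let interleaved : ℕ → Set ZFSet := Sum.elim Cs Ds ∘ Equiv.natSumNatEquivNat.symm
  refine ⟨.or (φ.renameClasses (Equiv.natSumNatEquivNat <| .inl ·))
    (ψ.renameClasses (Equiv.natSumNatEquivNat <| .inr ·)), interleaved, fun k => ?_, fun v => ?_⟩
  · rcases h : Equiv.natSumNatEquivNat.symm k with i | i <;> simp [interleaved, h, hCs, hDs]
  · have hleft : (interleaved ∘ (Equiv.natSumNatEquivNat <| .inl ·)) = Cs := by
      ext1; simp [interleaved]
    have hright : (interleaved ∘ (Equiv.natSumNatEquivNat <| .inr ·)) = Ds := by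
      ext1; simp [interleaved]
    simp only [GBFormula.Sat, GBFormula.sat_renameClasses, hleft, hright, hφ, hψ]

theorem and (hΦ : Expressible Φ) (hΨ : Expressible Ψ) : Expressible fun v => Φ v ∧ Ψ v := by
  simpa only [not_or, not_not] using (hΦ.not.or hΨ.not).not

theorem imp (hΦ : Expressible Φ) (hΨ : Expressible Ψ) : Expressible fun v => Φ v → Ψ v := by
  simpa only [imp_iff_not_or] using hΦ.not.or hΨ

theorem iff (hΦ : Expressible Φ) (hΨ : Expressible Ψ) : Expressible fun v => (Φ v ↔ Ψ v) := by
  simpa only [iff_iff_implies_and_implies] using (hΦ.imp hΨ).and (hΨ.imp hΦ)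

theorem exists_update (hΦ : Expressible Φ) (i : ℕ) :
    Expressible fun v => ∃ x, Φ (update v i x) := by
  obtain ⟨φ, Cs, hCs, hφ⟩ := hΦ
  refine ⟨.ex i φ, Cs, hCs, fun v => ?_⟩
  simp only [GBFormula.Sat, ← hφ, comp_update, Subtype.exists, exists_prop]

theorem forall_update (hΦ : Expressible Φ) (i : ℕ) :
    Expressible fun v => ∀ x, Φ (update v i x) := by
  simpa only [not_exists, not_not] using (hΦ.not.exists_update i).not

end Expressible

/-- A type `α` of tuples of sets of the model, read off the variables below `arity`. It lets
definable relations be written with ordinary binders. In the instances below variable `0` is never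
read, so that it can stand for the element of a class given by comprehension. -/
class Context (𝕄 : outParam GBModel.{u}) (α : Type*) where
  arity : ℕ
  read : (ℕ → 𝕄.M) → α
  read_update (v : ℕ → 𝕄.M) {i : ℕ} (x : 𝕄.M) (hi : arity ≤ i) : read (update v i x) = read v

open Context

instance : Context 𝕄 𝕄.M where
  arity := 2
  read v := v 1
  read_update v i x hi := by rw [update_of_ne (by omega)]

variable {α β : Type*} [Context 𝕄 α] [Context 𝕄 β]

instance : Context 𝕄 (α × 𝕄.M) where
  arity := arity α + 1
  read v := (read v, v (arity α))
  read_update v i x hi := by rw [read_update v x (by omega), update_of_ne (by omega)]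

theorem read_prod (v : ℕ → 𝕄.M) : (read v : α × 𝕄.M) = (read v, v (arity α)) := rfl

theorem read_update_arity (v : ℕ → 𝕄.M) (x : 𝕄.M) :
    (read (update v (arity α) x) : α × 𝕄.M) = (read v, x) := by
  rw [read_prod, read_update v x le_rfl, update_self]

/-- A map of contexts that forgets some of the last variables. -/
@[fun_prop]
def IsForgetful (g : β → α) : Prop := ∀ v : ℕ → 𝕄.M, g (read v) = read v

/-- A relation expressed by a formula in the variables of its context. -/
@[fun_prop]
def Definable (Φ : α → Prop) : Prop := Expressible fun v : ℕ → 𝕄.M => Φ (read v)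

/-- A function on a context whose graph is expressible, whatever variable names the value. -/
@[fun_prop]
def DefinableFun (f : α → 𝕄.M) : Prop := ∀ i, Expressible fun v => v i = f (read v)

@[fun_prop]
theorem IsForgetful.id : IsForgetful fun a : α => a := fun _ => rfl

@[fun_prop]
theorem IsForgetful.fst {g : β → α × 𝕄.M} (hg : IsForgetful g) :
    IsForgetful fun b => (g b).1 := fun v => congrArg Prod.fst (hg v)

namespace DefinableFun

variable {f g : α → 𝕄.M}

theorem comp_isForgetful {h : β → α} (hf : DefinableFun f) (hh : IsForgetful h) :
    DefinableFun fun b => f (h b) := fun i => by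
  simpa only [hh _] using hf i

@[fun_prop]
theorem id : DefinableFun fun x : 𝕄.M => x := fun i => .var_eq i 1

@[fun_prop]
theorem fst {g : β → 𝕄.M × 𝕄.M} (hg : IsForgetful g) : DefinableFun fun b => (g b).1 := fun i => by
  simp only [hg _]
  exact .var_eq i 1

@[fun_prop]
theorem snd {g : β → α × 𝕄.M} (hg : IsForgetful g) : DefinableFun fun b => (g b).2 := fun i => by
  simp only [hg _]
  exact .var_eq i (arity α)

@[fun_prop]
theorem const (c : 𝕄.M) : DefinableFun fun _ : α => c := fun i => by
  have hsingleton : ∀ x : 𝕄.M, x.1 ∈ (GBModel.upair c c).1.toSet ↔ x = c := fun _ =>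
    mem_upair.trans or_self_iff
  simpa only [hsingleton] using
    Expressible.var_mem_class (𝕄.sets_are_classes _ (GBModel.upair c c).2) i

@[fun_prop]
theorem upair (hf : DefinableFun f) (hg : DefinableFun g) :
    DefinableFun fun a => GBModel.upair (f a) (g a) := fun i => by
  let z := max (i + 1) (arity α)
  have hi : i ≠ z := by omega
  have hz : arity α ≤ z := by omega
  have hmem := ((Expressible.var_mem z i).iff ((hf z).or (hg z))).forall_update z
  simp only [update_self, update_of_ne hi, read_update _ _ hz, ← mem_upair] at hmem
  simpa only [← GBModel.ext_iff] using hmem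

@[fun_prop]
theorem opair (hf : DefinableFun f) (hg : DefinableFun g) :
    DefinableFun fun a => GBModel.opair (f a) (g a) :=
  (hf.upair hf).upair (hf.upair hg)

end DefinableFun

namespace Definable

variable {Φ Ψ : α → Prop} {f g : α → 𝕄.M}

theorem comp_isForgetful {h : β → α} (hΦ : Definable Φ) (hh : IsForgetful h) :
    Definable fun b => Φ (h b) := by
  simpa only [Definable, hh _] using hΦ

@[fun_prop]
theorem not (hΦ : Definable Φ) : Definable fun a => ¬Φ a := Expressible.not hΦ

@[fun_prop]
theorem or (hΦ : Definable Φ) (hΨ : Definable Ψ) : Definable fun a => Φ a ∨ Ψ a :=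
  Expressible.or hΦ hΨ

@[fun_prop]
theorem and (hΦ : Definable Φ) (hΨ : Definable Ψ) : Definable fun a => Φ a ∧ Ψ a :=
  Expressible.and hΦ hΨ

@[fun_prop]
theorem imp (hΦ : Definable Φ) (hΨ : Definable Ψ) : Definable fun a => Φ a → Ψ a :=
  Expressible.imp hΦ hΨ

@[fun_prop]
theorem exists_set {R : α → 𝕄.M → Prop} (hR : Definable fun a : α × 𝕄.M => R a.1 a.2) :
    Definable fun a => ∃ x, R a x := by
  simpa only [Definable, read_update_arity] using Expressible.exists_update hR (arity α)

@[fun_prop]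
theorem forall_set {R : α → 𝕄.M → Prop} (hR : Definable fun a : α × 𝕄.M => R a.1 a.2) :
    Definable fun a => ∀ x, R a x := by
  simpa only [Definable, read_update_arity] using Expressible.forall_update hR (arity α)

theorem subst {R : α → 𝕄.M → Prop} (hR : Definable fun a : α × 𝕄.M => R a.1 a.2)
    (hf : DefinableFun f) : Definable fun a => R a (f a) := by
  simpa only [Definable, update_self, read_update _ _ le_rfl, read_update_arity, exists_eq_left]
    using ((hf (arity α)).and hR).exists_update (arity α)

@[fun_prop]
theorem mem_class {C : Set ZFSet} (hC : C ∈ 𝕄.Cls) (hf : DefinableFun f) :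
    Definable fun a => (f a : ZFSet) ∈ C :=
  subst (R := fun _ x => x.1 ∈ C) (Expressible.var_mem_class hC _) hf

theorem rel₂ {R : 𝕄.M → 𝕄.M → Prop} (hR : Definable fun a : (α × 𝕄.M) × 𝕄.M => R a.1.2 a.2)
    (hf : DefinableFun f) (hg : DefinableFun g) : Definable fun a => R (f a) (g a) :=
  subst (R := fun a x => R x (g a))
    (subst (R := fun a y => R a.2 y) hR (hg.comp_isForgetful (IsForgetful.id.fst))) hf

@[fun_prop]
theorem mem (hf : DefinableFun f) (hg : DefinableFun g) : Definable fun a => f a ∈ g a :=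
  rel₂ (R := (· ∈ ·)) (Expressible.var_mem (arity α) (arity α + 1)) hf hg

@[fun_prop]
theorem eq (hf : DefinableFun f) (hg : DefinableFun g) : Definable fun a => f a = g a :=
  rel₂ (R := (· = ·)) (Expressible.var_eq (arity α) (arity α + 1)) hf hg

end Definable

theorem Expressible.exists_class {Φ : (ℕ → 𝕄.M) → Prop} (hΦ : Expressible Φ) (v : ℕ → 𝕄.M) :
    ∃ C ∈ 𝕄.Cls, ∀ x : 𝕄.M, x.1 ∈ C ↔ Φ (update v 0 x) := by
  obtain ⟨φ, Cs, hCs, hφ⟩ := hΦ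
  refine ⟨_, 𝕄.comprehension φ (Subtype.val ∘ v) Cs (fun n => (v n).2) hCs, fun x => ?_⟩
  simp only [← hφ, comp_update, Set.mem_ofPred_eq, x.2, true_and]

theorem Definable.exists_class {Φ : 𝕄.M → Prop} (hΦ : Definable Φ) :
    ∃ C ∈ 𝕄.Cls, ∀ x : 𝕄.M, x.1 ∈ C ↔ Φ x := by
  have hgraph := ((DefinableFun.id 0).and hΦ).exists_update 1
  have hread (v : ℕ → 𝕄.M) (x : 𝕄.M) : read (update v 1 x) = x := update_self ..
  simp only [hread, update_of_ne zero_ne_one, exists_eq_left'] at hgraph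
  simpa only [update_self] using hgraph.exists_class fun _ => ⟨∅, 𝕄.empty_mem⟩

theorem Definable.exists_class_opair {R : 𝕄.M → 𝕄.M → Prop}
    (hR : Definable fun a : 𝕄.M × 𝕄.M => R a.1 a.2) :
    ∃ C ∈ 𝕄.Cls, ∀ x y : 𝕄.M, (opair x y).1 ∈ C ↔ R x y := by
  have hpair : DefinableFun fun a : 𝕄.M × 𝕄.M => opair a.1 a.2 := by fun_prop
  have hgraph := (((hpair 0).and hR).exists_update 2).exists_update 1
  have hread (v : ℕ → 𝕄.M) (x y : 𝕄.M) :
      (read (update (update v 1 x) 2 y) : 𝕄.M × 𝕄.M) = (x, y) := by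
    rw [show 2 = arity 𝕄.M from rfl, read_update_arity]
    exact congrArg (·, y) (update_self 1 x v)
  obtain ⟨C, hC, hmem⟩ := hgraph.exists_class fun _ => ⟨∅, 𝕄.empty_mem⟩
  refine ⟨C, hC, fun x y => ?_⟩
  simp [hmem, hread, opair_inj, and_assoc, -Subtype.exists]

/-! ### Sets of the model -/

namespace GBModel

/-- The union of a set, as an operation on the sets of the model. -/
def sUnion (x : 𝕄.M) : 𝕄.M := ⟨⋃₀ x.1, 𝕄.sUnion_mem _ x.2⟩

theorem mem_sUnion {x z : 𝕄.M} : z ∈ sUnion x ↔ ∃ y ∈ x, z ∈ y := by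
  refine ZFSet.mem_sUnion.trans ⟨?_, fun ⟨y, hy, hz⟩ => ⟨y, hy, hz⟩⟩
  exact fun ⟨y, hy, hz⟩ => ⟨⟨y, 𝕄.transitive _ x.2 _ hy⟩, hy, hz⟩

theorem mem_wf : WellFounded fun x y : 𝕄.M => x ∈ y :=
  InvImage.wf Subtype.val ZFSet.mem_wf

theorem exists_separation {Φ : 𝕄.M → Prop} (hΦ : Definable Φ) (a : 𝕄.M) :
    ∃ b : 𝕄.M, ∀ x, x ∈ b ↔ x ∈ a ∧ Φ x := by
  obtain ⟨C, hC, hCΦ⟩ := hΦ.exists_class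
  obtain ⟨b, hb, hmem⟩ := 𝕄.separation C hC a a.2
  exact ⟨⟨b, hb⟩, fun x => (hmem x).trans (and_congr_right' (hCΦ x))⟩

theorem exists_collection {R : 𝕄.M → 𝕄.M → Prop}
    (hR : Definable fun a : 𝕄.M × 𝕄.M => R a.1 a.2) (a : 𝕄.M) (htotal : ∀ x ∈ a, ∃ y, R x y) :
    ∃ b : 𝕄.M, ∀ x ∈ a, ∃ y ∈ b, R x y := by
  obtain ⟨C, hC, hCR⟩ := hR.exists_class_opair
  simp only [coe_opair] at hCR
  obtain ⟨b, hb, hmem⟩ := 𝕄.collection C hC a a.2 fun x hx => by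
    let x' : 𝕄.M := ⟨x, 𝕄.transitive _ a.2 _ hx⟩
    obtain ⟨y, hy⟩ := htotal x' hx
    exact ⟨y, y.2, (hCR x' y).2 hy⟩
  refine ⟨⟨b, hb⟩, fun x hx => ?_⟩
  obtain ⟨y, hy, hxy⟩ := hmem x hx
  let y' : 𝕄.M := ⟨y, 𝕄.transitive _ hb _ hy⟩
  exact ⟨y', hy, (hCR x y').1 hxy⟩

theorem exists_collection_of_exists {R : 𝕄.M → 𝕄.M → Prop}
    (hR : Definable fun a : 𝕄.M × 𝕄.M => R a.1 a.2) (a : 𝕄.M) :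
    ∃ b : 𝕄.M, ∀ x ∈ a, (∃ y, R x y) → ∃ y ∈ b, R x y := by
  have hdefined : Definable fun a : 𝕄.M × 𝕄.M => ∃ y, R a.1 y :=
    hR.exists_set.comp_isForgetful (h := Prod.fst) (by fun_prop)
  obtain ⟨b, hb⟩ := exists_collection (R := fun x y => (∃ y, R x y) → R x y)
    (hdefined.imp hR) a fun x _ => by
      by_cases h : ∃ y, R x y
      · exact h.imp fun y hy _ => hy
      · exact ⟨x, fun h' => absurd h' h⟩
  exact ⟨b, fun x hx hxy => (hb x hx).imp fun y hy => ⟨hy.1, hy.2 hxy⟩⟩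

theorem exists_transitive_mem (a : 𝕄.M) :
    ∃ t : 𝕄.M, a ∈ t ∧ ∀ y ∈ t, ∀ z ∈ y, z ∈ t := by
  induction a using mem_wf.induction with
  | _ a ih =>
  obtain ⟨b, hb⟩ := exists_collection
    (R := fun x t => x ∈ t ∧ ∀ y ∈ t, ∀ z ∈ y, z ∈ t) (by fun_prop) a ih
  obtain ⟨c, hc⟩ := exists_separation
    (Φ := fun t : 𝕄.M => ∀ y ∈ t, ∀ z ∈ y, z ∈ t) (by fun_prop) b
  have mem_insert (z : 𝕄.M) :
      z ∈ sUnion (upair (upair a a) (sUnion c)) ↔ z = a ∨ ∃ t ∈ c, z ∈ t := by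
    simp [mem_sUnion, mem_upair, -Subtype.exists]
  refine ⟨sUnion (upair (upair a a) (sUnion c)), (mem_insert a).2 (.inl rfl), ?_⟩
  simp only [mem_insert]
  rintro y (rfl | ⟨t, htc, hyt⟩) z hzy
  · obtain ⟨t, htb, hzt, ht⟩ := hb z hzy
    exact .inr ⟨t, (hc t).2 ⟨htb, ht⟩, hzt⟩
  · exact .inr ⟨t, htc, ((hc t).1 htc).2 y hyt z hzy⟩

theorem exists_prod_subset (a b : 𝕄.M) : ∃ c : 𝕄.M, ∀ x ∈ a, ∀ y ∈ b, opair x y ∈ c := by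
  have hrow (x : 𝕄.M) : ∃ s : 𝕄.M, ∀ y ∈ b, opair x y ∈ s := by
    obtain ⟨s, hs⟩ := exists_collection (R := fun y z => z = opair x y) (by fun_prop) b
      fun y _ => ⟨_, rfl⟩
    exact ⟨s, fun y hy => by simpa [-Subtype.exists] using hs y hy⟩
  obtain ⟨rows, hrows⟩ :=
    exists_collection (R := fun x s => ∀ y ∈ b, opair x y ∈ s) (by fun_prop) a
      fun x _ => hrow x
  refine ⟨sUnion rows, fun x hx y hy => ?_⟩
  obtain ⟨s, hs, hxs⟩ := hrows x hx
  exact mem_sUnion.2 ⟨s, hs, hxs y hy⟩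

end GBModel

/-! ### Evaluation of names -/

theorem fst_mem_sUnion_sUnion {τ p σ : ZFSet} (h : τ.pair p ∈ σ) : τ ∈ (⋃₀ ⋃₀ σ : ZFSet) :=
  ZFSet.mem_sUnion_of_mem (ZFSet.mem_singleton.2 rfl)
    (ZFSet.mem_sUnion_of_mem (ZFSet.mem_pair.2 (.inl rfl)) h)

theorem rank_lt_of_pair_mem {τ p σ : ZFSet} (h : τ.pair p ∈ σ) : τ.rank < σ.rank := calc
  τ.rank < ({τ} : ZFSet).rank := ZFSet.rank_lt_of_mem (ZFSet.mem_singleton.2 rfl)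
  _ < (τ.pair p).rank := ZFSet.rank_lt_of_mem (ZFSet.mem_pair.2 (.inl rfl))
  _ < σ.rank := ZFSet.rank_lt_of_mem h

theorem mem_nameEval {G : Set ZFSet} {σ z : ZFSet} :
    z ∈ nameEval G σ ↔ ∃ τ p : ZFSet, p ∈ G ∧ τ.pair p ∈ σ ∧ nameEval G τ = z := by
  rw [nameEval, nameEvalAux, zimage, @ZFSet.mem_image _ (Classical.allZFSetDefinable _)]
  constructor
  · rintro ⟨τ, hτ, rfl⟩
    obtain ⟨-, p, hp, hτp⟩ := ZFSet.mem_sep.1 hτ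
    exact ⟨τ, p, hp, hτp, by rw [dif_pos (rank_lt_of_pair_mem hτp), nameEval]⟩
  · rintro ⟨τ, p, hp, hτp, rfl⟩
    exact ⟨τ, ZFSet.mem_sep.2 ⟨fst_mem_sUnion_sUnion hτp, p, hp, hτp⟩,
      dif_pos (rank_lt_of_pair_mem hτp)⟩

namespace GBModel

theorem mem_and_mem_of_opair_mem {t x y : 𝕄.M} (ht : ∀ y ∈ t, ∀ z ∈ y, z ∈ t)
    (hxy : opair x y ∈ t) : x ∈ t ∧ y ∈ t := by
  have hpair : upair x y ∈ t := ht _ hxy _ (mem_upair.2 (.inr rfl))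
  exact ⟨ht _ hpair _ (mem_upair.2 (.inl rfl)), ht _ hpair _ (mem_upair.2 (.inr rfl))⟩

theorem mem_nameEval {G : Set ZFSet} {τ : 𝕄.M} {z : ZFSet} :
    z ∈ nameEval G τ ↔ ∃ π r : 𝕄.M, r.1 ∈ G ∧ opair π r ∈ τ ∧ nameEval G π = z := by
  rw [CF.mem_nameEval]
  constructor
  · rintro ⟨π, r, hr, hπr, rfl⟩
    have hpair : ({π, r} : ZFSet) ∈ 𝕄.M :=
      𝕄.transitive _ (𝕄.transitive _ τ.2 _ hπr) _ (ZFSet.mem_pair.2 (.inr rfl))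
    refine ⟨⟨π, 𝕄.transitive _ hpair _ (ZFSet.mem_pair.2 (.inl rfl))⟩,
      ⟨r, 𝕄.transitive _ hpair _ (ZFSet.mem_pair.2 (.inr rfl))⟩, hr, ?_, rfl⟩
    rwa [mem_iff, coe_opair]
  · rintro ⟨π, r, hr, hπr, rfl⟩
    exact ⟨π, r, hr, by rwa [mem_iff, coe_opair] at hπr, rfl⟩

theorem name_induction {motive : 𝕄.M → Prop}
    (h : ∀ τ : 𝕄.M, (∀ π r, opair π r ∈ τ → motive π) → motive τ) (τ : 𝕄.M) : motive τ := by
  induction τ using (InvImage.wf (fun τ : 𝕄.M => τ.1.rank) wellFounded_lt).induction with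
  | _ τ ih =>
    refine h τ fun π r hπr => ih π (rank_lt_of_pair_mem (p := r.1) ?_)
    rwa [← coe_opair]

end GBModel

/-! ### Generic filters -/

namespace ClassForcing

variable (F : ClassForcing 𝕄) {p q r : 𝕄.M}

/-- The order of the forcing, as a relation between sets of the model that also records that both
are conditions. -/
def Extends (q p : 𝕄.M) : Prop := q.1 ∈ F.P ∧ p.1 ∈ F.P ∧ F.le q p

variable {F}

theorem extends_rfl (hp : p.1 ∈ F.P) : F.Extends p p := ⟨hp, hp, F.le_refl p hp⟩

theorem Extends.trans (hrq : F.Extends r q) (hqp : F.Extends q p) : F.Extends r p :=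
  ⟨hrq.1, hqp.2.1, F.le_trans _ _ _ hrq.2.2 hqp.2.2⟩

@[fun_prop]
theorem definable_extends {f g : α → 𝕄.M} (hf : DefinableFun f) (hg : DefinableFun g) :
    Definable fun a => F.Extends (f a) (g a) := by
  have hiff (q p : 𝕄.M) : F.Extends q p ↔
      (opair q p).1 ∈ {x : ZFSet | ∃ p ∈ F.P, ∃ q ∈ F.P, F.le p q ∧ x = p.pair q} := by
    simp [Extends, coe_opair, ZFSet.pair_inj]
  simpa only [hiff] using Definable.mem_class F.le_cls (hf.opair hg)

end ClassForcing

namespace IsGeneric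

variable {F : ClassForcing 𝕄} {p q : 𝕄.M} {G : Set ZFSet}

theorem mem_of_extends (hG : IsGeneric 𝕄 F.P F.le G) (hq : q.1 ∈ G) (hqp : F.Extends q p) :
    p.1 ∈ G := hG.1.2.2.1 q hq p hqp.2.1 hqp.2.2

theorem exists_common_extension (hG : IsGeneric 𝕄 F.P F.le G) (hp : p.1 ∈ G) (hq : q.1 ∈ G) :
    ∃ r : 𝕄.M, r.1 ∈ G ∧ F.Extends r p ∧ F.Extends r q := by
  obtain ⟨r, hr, hrp, hrq⟩ := hG.1.2.2.2 p hp q hq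
  exact ⟨⟨r, 𝕄.classes_sub _ F.P_cls (hG.1.1 hr)⟩, hr, ⟨hG.1.1 hr, hG.1.1 hp, hrp⟩,
    ⟨hG.1.1 hr, hG.1.1 hq, hrq⟩⟩

theorem exists_mem_or_exists_forall_extends_not (hG : IsGeneric 𝕄 F.P F.le G) {D : 𝕄.M → Prop}
    (hD : Definable D) :
    (∃ q : 𝕄.M, q.1 ∈ G ∧ D q) ∨ ∃ q : 𝕄.M, q.1 ∈ G ∧ ∀ q', F.Extends q' q → ¬D q' := by
  obtain ⟨C, hC, hCD⟩ := hD.exists_class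
  have hdecides : Definable fun q : 𝕄.M =>
      F.Extends q q ∧ (q.1 ∈ C ∨ ∀ q', F.Extends q' q → q'.1 ∉ C) := by
    fun_prop (disch := exact hC)
  obtain ⟨E, hE, hmemE⟩ := hdecides.exists_class
  simp only [hCD] at hmemE
  have hdense : DenseIn F.P F.le E := by
    refine ⟨fun q hq => ((hmemE ⟨q, 𝕄.classes_sub E hE hq⟩).1 hq).1.1, fun p hp => ?_⟩
    let p' : 𝕄.M := ⟨p, 𝕄.classes_sub _ F.P_cls hp⟩
    by_cases h : ∃ q, F.Extends q p' ∧ D q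
    · obtain ⟨q, hqp, hq⟩ := h
      exact ⟨q, (hmemE q).2 ⟨ClassForcing.extends_rfl hqp.1, .inl hq⟩, hqp.2.2⟩
    · push Not at h
      exact ⟨p, (hmemE p').2 ⟨ClassForcing.extends_rfl hp, .inr h⟩, F.le_refl p hp⟩
  obtain ⟨q, hqG, hqE⟩ := hG.2 E hE hdense
  let q' : 𝕄.M := ⟨q, 𝕄.classes_sub E hE hqE⟩
  exact ((hmemE q').1 hqE).2.imp (⟨q', hqG, ·⟩) (⟨q', hqG, ·⟩)

end IsGeneric

/-! ### The forcing relation -/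

namespace ClassForcing

variable (F : ClassForcing 𝕄) {p q τ y : 𝕄.M} {G : Set ZFSet}

/-- If `R q' π z` stands for `q' ⊩ π = ž`, then `q` forces `τ ≠ y̌` by deciding one element: either
`q` puts an element into `τ` that is forced to lie outside `y`, or some element of `y` is forced to
lie outside `τ`. -/
def Refutes (R : 𝕄.M → 𝕄.M → 𝕄.M → Prop) (q τ y : 𝕄.M) : Prop :=
  (∃ π r, opair π r ∈ τ ∧ F.Extends q r ∧ ∀ q', F.Extends q' q → ∀ z ∈ y, ¬R q' π z) ∨
    ∃ z ∈ y, ∀ q', F.Extends q' q → ∀ π r, opair π r ∈ τ → F.Extends q' r → ¬R q' π z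

/-- One step of the recursion for `p ⊩ τ = y̌`: no extension of `p` refutes `τ = y̌`. -/
def ForcingStep (R : 𝕄.M → 𝕄.M → 𝕄.M → Prop) (p τ y : 𝕄.M) : Prop :=
  ∀ q, F.Extends q p → ¬F.Refutes R q τ y

/-- The relation on triples coded by a set of the model. -/
def TripleMem (S p τ y : 𝕄.M) : Prop := opair p (opair τ y) ∈ S

/-- The forcing relation `p ⊩ τ = y̌` for `y` in the model, as the union of the sets of the model
that are post-fixed points of `ForcingStep`. This replaces the recursion on `τ` by a single set
quantifier, so that definability is immediate. -/
def ForcesEq (p τ y : 𝕄.M) : Prop :=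
  ∃ S : 𝕄.M, (∀ p τ y, TripleMem S p τ y → F.ForcingStep (TripleMem S) p τ y) ∧ TripleMem S p τ y

@[fun_prop]
theorem definable_forcesEq {f g h : α → 𝕄.M} (hf : DefinableFun f) (hg : DefinableFun g)
    (hh : DefinableFun h) : Definable fun a => F.ForcesEq (f a) (g a) (h a) := by
  have hcoded : Definable fun t : 𝕄.M =>
      ∃ S : 𝕄.M, (∀ p τ y, TripleMem S p τ y → F.ForcingStep (TripleMem S) p τ y) ∧ t ∈ S := by
    unfold ForcingStep Refutes TripleMem
    fun_prop
  obtain ⟨C, hC, hCF⟩ := hcoded.exists_class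
  have htriple := Definable.mem_class hC (hf.opair (hg.opair hh))
  simp only [hCF] at htriple
  exact htriple

variable {F}

theorem Refutes.mono {R R' : 𝕄.M → 𝕄.M → 𝕄.M → Prop}
    (h : ∀ q' π z, F.Extends q' q → (∃ r, opair π r ∈ τ) → z ∈ y → R q' π z → R' q' π z)
    (hR' : F.Refutes R' q τ y) : F.Refutes R q τ y := by
  rcases hR' with ⟨π, r, hπr, hqr, hnot⟩ | ⟨z, hz, hnot⟩
  · exact .inl ⟨π, r, hπr, hqr, fun q' hq' z hz hR =>
      hnot q' hq' z hz (h q' π z hq' ⟨r, hπr⟩ hz hR)⟩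
  · exact .inr ⟨z, hz, fun q' hq' π r hπr hq'r hR =>
      hnot q' hq' π r hπr hq'r (h q' π z hq' ⟨r, hπr⟩ hz hR)⟩

theorem ForcesEq.forcingStep (h : F.ForcesEq p τ y) : F.ForcingStep F.ForcesEq p τ y := by
  obtain ⟨S, hS, hpτy⟩ := h
  exact fun q hqp hq => hS p τ y hpτy q hqp (hq.mono fun _ _ _ _ _ _ hmem => ⟨S, hS, hmem⟩)

theorem ForcingStep.forcesEq {P : 𝕄.M} (hP : P.1.toSet = F.P)
    (h : F.ForcingStep F.ForcesEq p τ y) (hp : p.1 ∈ F.P) : F.ForcesEq p τ y := by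
  obtain ⟨T, hmemT, hT⟩ := exists_transitive_mem (opair P (opair τ y))
  obtain ⟨hPT, hτyT⟩ := mem_and_mem_of_opair_mem hT hmemT
  obtain ⟨hτT, hyT⟩ := mem_and_mem_of_opair_mem hT hτyT
  have hcondT {q : 𝕄.M} (hq : q.1 ∈ F.P) : q ∈ T := hT P hPT q (by rwa [← hP] at hq)
  obtain ⟨T₂, hT₂⟩ := exists_prod_subset T T
  obtain ⟨T₃, hT₃⟩ := exists_prod_subset T T₂
  obtain ⟨S, hS⟩ := exists_separation (Φ := fun t : 𝕄.M => ∃ p τ y, t = opair p (opair τ y) ∧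
    τ ∈ T ∧ y ∈ T ∧ F.ForcingStep F.ForcesEq p τ y)
    (by unfold ForcingStep Refutes; fun_prop) T₃
  have hmemS {p τ y : 𝕄.M} (hp : p.1 ∈ F.P) (hτ : τ ∈ T) (hy : y ∈ T)
      (h : F.ForcingStep F.ForcesEq p τ y) : TripleMem S p τ y :=
    (hS _).2 ⟨hT₃ p (hcondT hp) _ (hT₂ τ hτ y hy), p, τ, y, rfl, hτ, hy, h⟩
  refine ⟨S, fun p τ y hpτy q hqp hq => ?_, hmemS hp hτT hyT h⟩
  obtain ⟨-, p', τ', y', heq, hτ, hy, hstep⟩ := (hS _).1 hpτy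
  obtain ⟨rfl, rfl, rfl⟩ : p = p' ∧ τ = τ' ∧ y = y' := by simpa only [opair_inj] using heq
  refine hstep q hqp (hq.mono fun q' π z hq' ⟨r, hπr⟩ hz hforces => ?_)
  have hπ : π ∈ T := (mem_and_mem_of_opair_mem hT (hT τ hτ _ hπr)).1
  exact hmemS hq'.1 hπ (hT y hy z hz) hforces.forcingStep

theorem ForcesEq.of_extends {P : 𝕄.M} (hP : P.1.toSet = F.P) (h : F.ForcesEq p τ y)
    (hqp : F.Extends q p) : F.ForcesEq q τ y :=
  ForcingStep.forcesEq hP (fun q' hq' => h.forcingStep q' (hq'.trans hqp)) hqp.1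

theorem ForcesEq.nameEval_eq (hG : IsGeneric 𝕄 F.P F.le G) (hp : p.1 ∈ G)
    (h : F.ForcesEq p τ y) : nameEval G τ = y := by
  induction τ using name_induction generalizing p y with
  | h τ ih =>
  ext z
  constructor
  · intro hz
    obtain ⟨π, r, hr, hπr, rfl⟩ := GBModel.mem_nameEval.1 hz
    obtain ⟨q, hq, z, hz, hforces⟩ | ⟨q, hq, hnot⟩ :=
      hG.exists_mem_or_exists_forall_extends_not
        (D := fun q => ∃ z ∈ y, F.ForcesEq q π z) (by fun_prop)
    · rwa [ih π r hπr hq hforces]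
    · obtain ⟨s, hs, hsp, hsq⟩ := hG.exists_common_extension hp hq
      obtain ⟨t, -, hts, htr⟩ := hG.exists_common_extension hs hr
      refine absurd (.inl ⟨π, r, hπr, htr, fun q' hq' z hz hforces => ?_⟩)
        (h.forcingStep t (hts.trans hsp))
      exact hnot q' (hq'.trans (hts.trans hsq)) ⟨z, hz, hforces⟩
  · intro hz
    lift z to 𝕄.M using 𝕄.transitive _ y.2 _ hz
    obtain ⟨q, hq, π, r, hπr, hqr, hforces⟩ | ⟨q, hq, hnot⟩ :=
      hG.exists_mem_or_exists_forall_extends_not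
        (D := fun q => ∃ π r, opair π r ∈ τ ∧ F.Extends q r ∧ F.ForcesEq q π z) (by fun_prop)
    · exact GBModel.mem_nameEval.2
        ⟨π, r, hG.mem_of_extends hq hqr, hπr, ih π r hπr hq hforces⟩
    · obtain ⟨s, -, hsp, hsq⟩ := hG.exists_common_extension hp hq
      refine absurd (.inr ⟨z, hz, fun q' hq' π r hπr hq'r hforces => ?_⟩) (h.forcingStep s hsp)
      exact hnot q' (hq'.trans hsq) ⟨π, r, hπr, hq'r, hforces⟩

theorem exists_forcesEq_of_nameEval_eq {P : 𝕄.M} (hP : P.1.toSet = F.P)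
    (hG : IsGeneric 𝕄 F.P F.le G) (h : nameEval G τ = y) :
    ∃ p : 𝕄.M, p.1 ∈ G ∧ F.ForcesEq p τ y := by
  induction τ using name_induction generalizing y with
  | h τ ih =>
  obtain ⟨q, hq, hrefutes⟩ | ⟨q, hq, hstep⟩ := hG.exists_mem_or_exists_forall_extends_not
    (D := fun q => F.Refutes F.ForcesEq q τ y) (by unfold Refutes; fun_prop)
  · exfalso
    rcases hrefutes with ⟨π, r, hπr, hqr, hnot⟩ | ⟨z, hz, hnot⟩
    · have hπy : nameEval G π ∈ y.1 :=
        h ▸ GBModel.mem_nameEval.2 ⟨π, r, hG.mem_of_extends hq hqr, hπr, rfl⟩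
      let z : 𝕄.M := ⟨nameEval G π, 𝕄.transitive _ y.2 _ hπy⟩
      obtain ⟨p, hp, hforces⟩ := ih π r hπr (y := z) rfl
      obtain ⟨s, -, hsq, hsp⟩ := hG.exists_common_extension hq hp
      exact hnot s hsq z hπy (hforces.of_extends hP hsp)
    · obtain ⟨π, r, hr, hπr, hπz⟩ := GBModel.mem_nameEval.1 (h ▸ hz : z.1 ∈ nameEval G τ)
      obtain ⟨p, hp, hforces⟩ := ih π r hπr hπz
      obtain ⟨s, hs, hsq, hsp⟩ := hG.exists_common_extension hq hp
      obtain ⟨t, -, hts, htr⟩ := hG.exists_common_extension hs hr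
      exact hnot t (hts.trans hsq) π r hπr htr (hforces.of_extends hP (hts.trans hsp))
  · exact ⟨q, hq, ForcingStep.forcesEq hP hstep (hG.1.1 hq)⟩

theorem isBoundedName {P : 𝕄.M} (hP : P.1.toSet = F.P) (σ : 𝕄.M) : IsBoundedName 𝕄 F σ := by
  obtain ⟨A, hA⟩ := exists_collection_of_exists (R := fun p x => F.ForcesEq p σ x) (by fun_prop) P
  refine ⟨A, A.2, ?_⟩
  rintro x ⟨⟨G, hG, hσx⟩, hx⟩
  lift x to 𝕄.M using hx
  obtain ⟨p, hp, hforces⟩ := exists_forcesEq_of_nameEval_eq hP hG hσx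
  have hpP : p ∈ P := by
    have := hG.1.1 hp
    rwa [← hP] at this
  obtain ⟨x', hx', hforces'⟩ := hA p hpP ⟨x, hforces⟩
  rwa [← hσx, hforces'.nameEval_eq hG hp]

end ClassForcing

end

/-- If `ℙ ∈ M` is a notion of set forcing (its domain and ordering are
elements of `M`), then `ℙ` has bounded names. -/
theorem set_forcing_bounded_names
    (𝕄 : GBModel) (F : ClassForcing 𝕄)
    (hPset : ∃ PP ∈ 𝕄.M, PP.toSet = F.P)
    (hleset : ∃ L ∈ 𝕄.M, ∀ p ∈ F.P, ∀ q ∈ F.P, (F.le p q ↔ p.pair q ∈ L)) :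
    HasBoundedNames 𝕄 F := by
  obtain ⟨P, hPM, hP⟩ := hPset
  exact fun σ hσ _ => ClassForcing.isBoundedName (P := ⟨P, hPM⟩) hP ⟨σ, hσ⟩

end CF
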